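/- Define the linear map Φ_W : ℂ[x,p] → End_ℂ(V) on the monomial basis by Φ_W(p^m x^n) = Σ_{s=0}^{min(m,n)} ((iħ)^s · m!·n!/(2^s·s!·(m−s)!·(n−s)!)) · F^{(m−s,n−s)}. Then Φ_W is a homomorphism from the Moyal algebra to operators: for all polynomials A, B ∈ ℂ[x,p], Φ_W(A ⋆ B) = Φ_W(A) ∘ Φ_W(B), where ⋆ is the Moyal product. -/

import Mathlib

open Complex MvPolynomial Finset

noncomputable section

/-- The standard basis vector `e n` of `V = ℕ →₀ ℂ`. -/
def e (n : ℕ) : ℕ →₀ ℂ := Finsupp.single n 1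

/-- The destruction operator `a`: `a (e 0) = 0`, `a (e (n+1)) = √(n+1) • e n`. -/
def aop : (ℕ →₀ ℂ) →ₗ[ℂ] (ℕ →₀ ℂ) :=
  Finsupp.lsum ℂ fun n => match n with
    | 0 => 0
    | k + 1 => ((Real.sqrt (k + 1) : ℝ) : ℂ) • Finsupp.lsingle k

/-- The creation operator `a†`: `a† (e n) = √(n+1) • e (n+1)`. -/
def adop : (ℕ →₀ ℂ) →ₗ[ℂ] (ℕ →₀ ℂ) :=
  Finsupp.lsum ℂ fun n => ((Real.sqrt (n + 1) : ℝ) : ℂ) • Finsupp.lsingle (n + 1)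

/-- `F^{(m,n)} = (−iℏ·a)^m ∘ (a†)^n` as an element of `End_ℂ(V)`. -/
def F (ℏ : ℝ) (m n : ℕ) : Module.End ℂ (ℕ →₀ ℂ) :=
  ((-(Complex.I * ℏ)) • (aop : Module.End ℂ (ℕ →₀ ℂ))) ^ m * (adop : Module.End ℂ (ℕ →₀ ℂ)) ^ n

/-- The polynomial algebra ℂ[x,p] in two commuting variables. -/
abbrev Pxp := MvPolynomial (Fin 2) ℂ

/-- The variable `x`. -/
def xv : Pxp := X 0
/-- The variable `p`. -/
def pv : Pxp := X 1

/-- The partial derivative `∂_x` as a linear endomorphism. -/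
def Dx : Module.End ℂ Pxp := (pderiv (0 : Fin 2)).toLinearMap
/-- The partial derivative `∂_p` as a linear endomorphism. -/
def Dp : Module.End ℂ Pxp := (pderiv (1 : Fin 2)).toLinearMap

/-- The Moyal product
`A ⋆ B = Σ_k (1/k!)(iℏ/2)^k Σ_{j=0}^k (−1)^j C(k,j) (∂_x^{k−j}∂_p^j A)(∂_x^j ∂_p^{k−j} B)`
(a finite sum for polynomials). -/
def moyal (ℏ : ℝ) (A B : Pxp) : Pxp :=
  ∑ k ∈ Finset.range (A.totalDegree + 1),
    ((1 / (k.factorial : ℂ)) * (Complex.I * ℏ / 2) ^ k) •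
      ∑ j ∈ Finset.range (k + 1),
        ((-1 : ℂ) ^ j * (k.choose j : ℂ)) •
          (((Dx ^ (k - j) * Dp ^ j) A) * ((Dx ^ j * Dp ^ (k - j)) B))

/-!
Put `c = iℏ/2`. The Moyal product is multiplication after `exp (c (∂_x ⊗ ∂_p - ∂_p ⊗ ∂_x))`, and
the Weyl map is the normal ordering `p^m x^n ↦ P^m Q^n` after `exp (c ∂_x ∂_p)`. If `[T, M]`
commutes with `T`, then `exp T * M = (M + [T, M]) * exp T`. Applied to both exponentials, this shows
that the operators `x ⋆ · = x + c ∂_p` and `p ⋆ · = p - c ∂_x` commute with every `· ⋆ B`, and that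
the Weyl map intertwines them with left multiplication by `Q` and `P`. As `1` generates `ℂ[x,p]`
under these two operators, `A ↦ Φ (A ⋆ B)` and `A ↦ Φ A * Φ B` agree because they agree at `1`.
-/

open scoped TensorProduct

theorem pow_mul_of_mul_eq_add {R : Type*} [Semiring R] {T M N : R} (hM : T * M = M * T + N)
    (hN : Commute T N) (k : ℕ) : T ^ k * M = M * T ^ k + k • (N * T ^ (k - 1)) := by
  induction k with
  | zero => simp
  | succ k ih =>
    have hNk : T * (k • (N * T ^ (k - 1))) = k • (N * T ^ k) := by
      rcases k with _ | k
      · simp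
      · rw [mul_smul_comm, ← mul_assoc, hN.eq, mul_assoc, Nat.add_sub_cancel, pow_succ']
    calc T ^ (k + 1) * M = T * M * T ^ k + T * (k • (N * T ^ (k - 1))) := by
          rw [pow_succ', mul_assoc, ih, mul_add, mul_assoc]
      _ = M * T ^ (k + 1) + (k + 1) • (N * T ^ (k + 1 - 1)) := by
          rw [hM, hNk, add_mul, mul_assoc, ← pow_succ', add_assoc, succ_nsmul', Nat.add_sub_cancel]

/-- An endomorphism each of whose orbits reaches `0`; its exponential series is then pointwise a
finite sum. -/
def IsLocallyNilpotent {K V : Type*} [Semiring K] [AddCommMonoid V] [Module K V]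
    (T : Module.End K V) : Prop :=
  ∀ v, ∃ n, (T ^ n) v = 0

namespace IsLocallyNilpotent

theorem smul {K V : Type*} [CommSemiring K] [AddCommMonoid V] [Module K V] {T : Module.End K V}
    (hT : IsLocallyNilpotent T) (c : K) : IsLocallyNilpotent (c • T) := fun v => by
  obtain ⟨n, hn⟩ := hT v
  exact ⟨n, by rw [smul_pow, LinearMap.smul_apply, hn, smul_zero]⟩

variable {K V : Type*} [Field K] [AddCommMonoid V] [Module K V] {T : Module.End K V}

theorem hasFiniteSupport_exp (hT : IsLocallyNilpotent T) (v : V) :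
    (fun k : ℕ => (k.factorial : K)⁻¹ • (T ^ k) v).HasFiniteSupport := by
  obtain ⟨n, hn⟩ := hT v
  refine (Set.finite_lt_nat n).subset fun k hk => ?_
  by_contra hnk
  exact hk (by simp only [Module.End.pow_map_zero_of_le (not_lt.mp hnk) hn, smul_zero])

/-- The exponential `∑ Tᵏ / k!` of a locally nilpotent endomorphism. -/
def exp (hT : IsLocallyNilpotent T) : Module.End K V where
  toFun v := ∑ᶠ k : ℕ, (k.factorial : K)⁻¹ • (T ^ k) v
  map_add' v w := by
    simp only [map_add, smul_add]
    exact finsum_add_distrib (hT.hasFiniteSupport_exp v) (hT.hasFiniteSupport_exp w)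
  map_smul' c v := by
    simp only [map_smul, smul_comm _ c, RingHom.id_apply]
    exact (smul_finsum' c (hT.hasFiniteSupport_exp v)).symm

theorem exp_apply_eq_sum (hT : IsLocallyNilpotent T) {v : V} {n : ℕ} (hn : (T ^ n) v = 0) :
    hT.exp v = ∑ k ∈ range n, (k.factorial : K)⁻¹ • (T ^ k) v := by
  refine finsum_eq_sum_of_support_subset _ fun k hk => ?_
  by_contra hnk
  rw [mem_coe, mem_range, not_lt] at hnk
  exact hk (by simp only [Module.End.pow_map_zero_of_le hnk hn, smul_zero])

theorem exp_mul_of_mul_eq_add [CharZero K] (hT : IsLocallyNilpotent T) {M N : Module.End K V}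
    (hM : T * M = M * T + N) (hN : Commute T N) : hT.exp * M = (M + N) * hT.exp := by
  ext v
  obtain ⟨n, hn⟩ := hT v
  have hpow (k : ℕ) : (T ^ k) (M v) = M ((T ^ k) v) + k • N ((T ^ (k - 1)) v) :=
    LinearMap.congr_fun (pow_mul_of_mul_eq_add hM hN k) v
  have hn' : (T ^ (n + 1)) v = 0 := Module.End.pow_map_zero_of_le n.le_succ hn
  have hMn : (T ^ (n + 1)) (M v) = 0 := by rw [hpow, hn', Nat.add_sub_cancel, hn]; simp
  have hshift (k : ℕ) : ((k + 1).factorial : K)⁻¹ • (k + 1) • N ((T ^ (k + 1 - 1)) v) =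
      (k.factorial : K)⁻¹ • N ((T ^ k) v) := by
    have hk : (k + 1 : K) ≠ 0 := k.cast_add_one_ne_zero
    rw [← Nat.cast_smul_eq_nsmul K, smul_smul, Nat.factorial_succ, Nat.add_sub_cancel]
    congr 1
    push_cast
    field_simp
  calc hT.exp (M v)
      = ∑ k ∈ range (n + 1), (k.factorial : K)⁻¹ • M ((T ^ k) v) +
          ∑ k ∈ range (n + 1), (k.factorial : K)⁻¹ • k • N ((T ^ (k - 1)) v) := by
        simp only [hT.exp_apply_eq_sum hMn, hpow, smul_add, sum_add_distrib]
    _ = M (hT.exp v) + N (hT.exp v) := by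
        rw [sum_range_succ' (fun k => (k.factorial : K)⁻¹ • k • N ((T ^ (k - 1)) v))]
        simp only [hshift, zero_smul, smul_zero, add_zero]
        rw [hT.exp_apply_eq_sum hn', map_sum, ← hT.exp_apply_eq_sum hn', hT.exp_apply_eq_sum hn,
          map_sum]
        simp only [map_smul]

end IsLocallyNilpotent

section PartialDerivatives

theorem degree_lt_of_mem_support_pderiv_pow {σ R : Type*} [CommSemiring R] (i : σ) (a k : ℕ)
    {A : MvPolynomial σ R} (hA : ∀ u ∈ A.support, u.degree < k + a) :
    ∀ u ∈ (((pderiv i).toLinearMap ^ a) A).support, u.degree < k := by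
  induction a generalizing A with
  | zero => simpa using hA
  | succ a ih =>
    rw [pow_succ, Module.End.mul_apply]
    refine ih fun u hu => ?_
    have hu' : u + Finsupp.single i 1 ∈ A.support := by
      rw [Derivation.coeFn_coe, mem_support_iff, coeff_pderiv] at hu
      exact mem_support_iff.mpr (left_ne_zero_of_mul hu)
    have hdeg := hA _ hu'
    rw [map_add, Finsupp.degree_single] at hdeg
    lia

theorem Dx_pow_mul_Dp_pow_apply_eq_zero {A : Pxp} {a b : ℕ} (h : A.totalDegree < a + b) :
    (Dx ^ a * Dp ^ b) A = 0 := by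
  have hA : ∀ u ∈ A.support, u.degree < 0 + a + b := fun u hu =>
    (le_totalDegree hu).trans_lt (by rwa [zero_add])
  rw [← support_eq_empty, Finset.eq_empty_iff_forall_notMem]
  exact fun u hu => Nat.not_lt_zero _ <| degree_lt_of_mem_support_pderiv_pow 0 a 0
    (degree_lt_of_mem_support_pderiv_pow 1 b (0 + a) hA) u hu

theorem commute_pderiv {σ R : Type*} [CommRing R] (i j : σ) :
    Commute (pderiv (R := R) i).toLinearMap (pderiv j).toLinearMap := by
  classical
  have hbracket : ⁅pderiv (R := R) i, pderiv (R := R) j⁆ = 0 := derivation_ext fun k => by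
    simp only [Derivation.commutator_apply, pderiv_X, Pi.single_apply]
    split_ifs <;> simp
  exact LinearMap.ext fun A => sub_eq_zero.mp (DFunLike.congr_fun hbracket A)

theorem commute_Dx_Dp : Commute Dx Dp := commute_pderiv 0 1

theorem Dx_Dp (A : Pxp) : Dx (Dp A) = Dp (Dx A) := LinearMap.congr_fun commute_Dx_Dp.eq A

theorem Dx_mul (A B : Pxp) : Dx (A * B) = Dx A * B + A * Dx B := pderiv_mul

theorem Dp_mul (A B : Pxp) : Dp (A * B) = Dp A * B + A * Dp B := pderiv_mul

theorem Dx_pow (A : Pxp) (n : ℕ) : Dx (A ^ n) = n * A ^ (n - 1) * Dx A := pderiv_pow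

theorem Dp_pow (A : Pxp) (n : ℕ) : Dp (A ^ n) = n * A ^ (n - 1) * Dp A := pderiv_pow

theorem Dx_xv : Dx xv = 1 := pderiv_X_self 0

theorem Dx_pv : Dx pv = 0 := pderiv_X_of_ne (by decide)

theorem Dp_xv : Dp xv = 0 := pderiv_X_of_ne (by decide)

theorem Dp_pv : Dp pv = 1 := pderiv_X_self 1

theorem Dx_pv_pow_mul_xv_pow (m n : ℕ) :
    Dx (pv ^ m * xv ^ n) = (n : ℂ) • (pv ^ m * xv ^ (n - 1)) := by
  rw [Dx_mul, Dx_pow, Dx_pow, Dx_pv, Dx_xv, smul_eq_C_mul, map_natCast]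
  ring

theorem Dp_pv_pow_mul_xv_pow (m n : ℕ) :
    Dp (pv ^ m * xv ^ n) = (m : ℂ) • (pv ^ (m - 1) * xv ^ n) := by
  rw [Dp_mul, Dp_pow, Dp_pow, Dp_pv, Dp_xv, smul_eq_C_mul, map_natCast]
  ring

theorem Dx_mul_Dp_pow_apply (s m n : ℕ) : ((Dx * Dp) ^ s) (pv ^ m * xv ^ n) =
    (m.descFactorial s * n.descFactorial s : ℂ) • (pv ^ (m - s) * xv ^ (n - s)) := by
  induction s with
  | zero => simp
  | succ s ih =>
    rw [pow_succ', Module.End.mul_apply, ih, map_smul, Module.End.mul_apply, Dp_pv_pow_mul_xv_pow,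
      map_smul, Dx_pv_pow_mul_xv_pow, smul_smul, smul_smul, Nat.descFactorial_succ,
      Nat.descFactorial_succ, Nat.sub_sub, Nat.sub_sub]
    congr 1
    push_cast
    ring

theorem isLocallyNilpotent_Dx_mul_Dp : IsLocallyNilpotent (Dx * Dp) := fun A =>
  ⟨A.totalDegree + 1, by
    rw [commute_Dx_Dp.mul_pow]
    exact Dx_pow_mul_Dp_pow_apply_eq_zero (by lia)⟩

theorem monomial_one_eq_pv_pow_mul_xv_pow (u : Fin 2 →₀ ℕ) :
    (monomial u 1 : Pxp) = pv ^ u 1 * xv ^ u 0 := by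
  rw [monomial_eq, Finsupp.prod_fintype _ _ (by simp), Fin.prod_univ_two, C_1, one_mul, mul_comm,
    pv, xv]

theorem linearMap_ext_pv_pow_mul_xv_pow {M : Type*} [AddCommMonoid M] [Module ℂ M]
    {f g : Pxp →ₗ[ℂ] M} (h : ∀ m n : ℕ, f (pv ^ m * xv ^ n) = g (pv ^ m * xv ^ n)) : f = g :=
  (basisMonomials (Fin 2) ℂ).ext fun u => by
    simpa only [coe_basisMonomials, monomial_one_eq_pv_pow_mul_xv_pow] using h (u 1) (u 0)

end PartialDerivatives

section LeftMultiplication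

/-- Left Moyal multiplication `x ⋆ ·` by the position variable, where `c` stands for `iℏ/2`. -/
def xStar (c : ℂ) : Module.End ℂ Pxp := LinearMap.mulLeft ℂ xv + c • Dp

/-- Left Moyal multiplication `p ⋆ ·` by the momentum variable, where `c` stands for `iℏ/2`. -/
def pStar (c : ℂ) : Module.End ℂ Pxp := LinearMap.mulLeft ℂ pv - c • Dx

variable (c : ℂ)

theorem xStar_apply (A : Pxp) : xStar c A = xv * A + c • Dp A := rfl

theorem pStar_apply (A : Pxp) : pStar c A = pv * A - c • Dx A := rfl

theorem Dx_xStar (A : Pxp) : Dx (xStar c A) = xStar c (Dx A) + A := by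
  simp only [xStar_apply, map_add, map_smul, Dx_mul, Dx_xv, Dx_Dp]
  ring

theorem Dp_xStar (A : Pxp) : Dp (xStar c A) = xStar c (Dp A) := by
  simp only [xStar_apply, map_add, map_smul, Dp_mul, Dp_xv, zero_mul, zero_add]

theorem Dx_pStar (A : Pxp) : Dx (pStar c A) = pStar c (Dx A) := by
  simp only [pStar_apply, map_sub, map_smul, Dx_mul, Dx_pv, zero_mul, zero_add]

theorem Dp_pStar (A : Pxp) : Dp (pStar c A) = pStar c (Dp A) + A := by
  simp only [pStar_apply, map_sub, map_smul, Dp_mul, Dp_pv, Dx_Dp]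
  ring

theorem linearMap_ext_of_xStar_pStar {E : Type*} [Ring E] [Algebra ℂ E] {P Q : E}
    {f g : Pxp →ₗ[ℂ] E} (h_one : f 1 = g 1)
    (hfx : ∀ A, f (xStar c A) = Q * f A) (hgx : ∀ A, g (xStar c A) = Q * g A)
    (hfp : ∀ A, f (pStar c A) = P * f A) (hgp : ∀ A, g (pStar c A) = P * g A) : f = g := by
  refine linearMap_ext_pv_pow_mul_xv_pow fun m n => ?_
  induction n generalizing m with
  | zero =>
    induction m with
    | zero => simpa using h_one
    | succ m ih =>
      have hp : pv ^ (m + 1) * xv ^ 0 = pStar c (pv ^ m * xv ^ 0) := by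
        rw [pStar_apply, Dx_pv_pow_mul_xv_pow, Nat.cast_zero, zero_smul, smul_zero, sub_zero,
          pow_succ', mul_assoc]
      rw [hp, hfp, hgp, ih]
  | succ n ih =>
    have hx : pv ^ m * xv ^ (n + 1) =
        xStar c (pv ^ m * xv ^ n) - (c * m) • (pv ^ (m - 1) * xv ^ n) := by
      rw [xStar_apply, Dp_pv_pow_mul_xv_pow, smul_smul, add_sub_cancel_right]
      ring
    rw [hx, map_sub, map_sub, hfx, hgx, map_smul, map_smul, ih, ih]

end LeftMultiplication

section MoyalProduct

/-- The Poisson bidifferential operator `∂_x ⊗ ∂_p - ∂_p ⊗ ∂_x`. -/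
def poisson : Module.End ℂ (Pxp ⊗[ℂ] Pxp) :=
  TensorProduct.map Dx Dp - TensorProduct.map Dp Dx

theorem poisson_pow_tmul (k : ℕ) (A B : Pxp) : (poisson ^ k) (A ⊗ₜ B) =
    ∑ j ∈ range (k + 1), ((-1 : ℂ) ^ j * (k.choose j : ℂ)) •
      ((Dx ^ (k - j) * Dp ^ j) A ⊗ₜ[ℂ] (Dx ^ j * Dp ^ (k - j)) B) := by
  have hcomm : Commute ((-1 : ℂ) • TensorProduct.map Dp Dx) (TensorProduct.map Dx Dp) := by
    refine Commute.smul_left ?_ _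
    rw [commute_iff_eq, ← TensorProduct.map_mul, ← TensorProduct.map_mul, commute_Dx_Dp.eq]
  have hpoisson : poisson = (-1 : ℂ) • TensorProduct.map Dp Dx + TensorProduct.map Dx Dp := by
    rw [poisson]
    module
  rw [hpoisson, hcomm.add_pow, LinearMap.sum_apply]
  refine sum_congr rfl fun j _ => ?_
  rw [← nsmul_eq_mul', ← Nat.cast_smul_eq_nsmul ℂ, smul_pow, TensorProduct.map_pow,
    TensorProduct.map_pow, smul_mul_assoc, ← TensorProduct.map_mul, smul_smul, mul_comm,
    (commute_Dx_Dp.pow_pow (k - j) j).eq]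
  rfl

theorem poisson_pow_tmul_eq_zero {k : ℕ} {A : Pxp} (hA : A.totalDegree < k) (B : Pxp) :
    (poisson ^ k) (A ⊗ₜ B) = 0 := by
  rw [poisson_pow_tmul]
  refine sum_eq_zero fun j hj => ?_
  rw [mem_range] at hj
  rw [Dx_pow_mul_Dp_pow_apply_eq_zero (by lia), TensorProduct.zero_tmul, smul_zero]

theorem isLocallyNilpotent_poisson : IsLocallyNilpotent poisson := fun t => by
  induction t with
  | zero => exact ⟨0, map_zero _⟩
  | tmul A B => exact ⟨A.totalDegree + 1, poisson_pow_tmul_eq_zero (Nat.lt_succ_self _) B⟩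
  | add s t hs ht =>
    obtain ⟨m, hm⟩ := hs
    obtain ⟨n, hn⟩ := ht
    exact ⟨max m n, by
      rw [map_add, Module.End.pow_map_zero_of_le (le_max_left m n) hm,
        Module.End.pow_map_zero_of_le (le_max_right m n) hn, add_zero]⟩

/-- The Moyal product `μ ∘ exp (c • poisson)` as a bilinear map, where `c` stands for `iℏ/2`. -/
def moyalBilin (c : ℂ) : Pxp →ₗ[ℂ] Pxp →ₗ[ℂ] Pxp :=
  TensorProduct.curry (LinearMap.mul' ℂ Pxp ∘ₗ (isLocallyNilpotent_poisson.smul c).exp)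

theorem moyal_eq_moyalBilin (ℏ : ℝ) (A B : Pxp) :
    moyal ℏ A B = moyalBilin (Complex.I * ℏ / 2) A B := by
  have hA (c : ℂ) : ((c • poisson) ^ (A.totalDegree + 1)) (A ⊗ₜ B) = 0 := by
    rw [smul_pow, LinearMap.smul_apply, poisson_pow_tmul_eq_zero (Nat.lt_succ_self _), smul_zero]
  rw [moyalBilin, TensorProduct.curry_apply, LinearMap.comp_apply,
    IsLocallyNilpotent.exp_apply_eq_sum _ (hA _), map_sum, moyal]
  refine sum_congr rfl fun k _ => ?_
  simp only [smul_pow, LinearMap.smul_apply, poisson_pow_tmul, map_smul, map_sum,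
    LinearMap.mul'_apply, smul_smul, one_div]

variable (c : ℂ)

theorem moyalBilin_one_left (B : Pxp) : moyalBilin c 1 B = B := by
  have h_one : ((c • poisson) ^ 1) (1 ⊗ₜ B) = 0 := by
    simp [poisson, Dx, Dp]
  rw [moyalBilin, TensorProduct.curry_apply, LinearMap.comp_apply,
    IsLocallyNilpotent.exp_apply_eq_sum _ h_one]
  simp

/-- The commutator `1 ⊗ D` of `c • poisson` with `L ⊗ 1` is also the defect in
`L (A * B) = L A * B + A * D B`, so multiplication turns `L ⊗ 1 + 1 ⊗ D` back into `L`. -/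
theorem moyalBilin_map_left {L D : Module.End ℂ Pxp} {a b : ℂ} (hD : D = c • (a • Dp - b • Dx))
    (hDx : ∀ A, Dx (L A) = L (Dx A) + a • A) (hDp : ∀ A, Dp (L A) = L (Dp A) + b • A)
    (hL : ∀ A B, L (A * B) = L A * B + A * D B) (A B : Pxp) :
    moyalBilin c (L A) B = L (moyalBilin c A B) := by
  have hcomm : c • poisson * L.rTensor Pxp = L.rTensor Pxp * c • poisson + D.lTensor Pxp :=
    TensorProduct.ext' fun A B => by
      simp only [poisson, hD, hDx, hDp, Module.End.mul_apply, LinearMap.smul_apply,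
        LinearMap.sub_apply, LinearMap.add_apply, LinearMap.rTensor_tmul, LinearMap.lTensor_tmul,
        TensorProduct.map_tmul, TensorProduct.add_tmul, ← TensorProduct.smul_tmul',
        TensorProduct.tmul_sub, TensorProduct.tmul_smul, map_sub, map_smul]
      module
  have hD_comm : Commute (c • poisson) (D.lTensor Pxp) := TensorProduct.ext' fun A B => by
    simp only [poisson, hD, Module.End.mul_apply, LinearMap.smul_apply, LinearMap.sub_apply,
      LinearMap.lTensor_tmul, TensorProduct.map_tmul, TensorProduct.tmul_sub,
      TensorProduct.tmul_smul, map_sub, map_smul, Dx_Dp]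
    module
  have hmul : LinearMap.mul' ℂ Pxp ∘ₗ (L.rTensor Pxp + D.lTensor Pxp) =
      L ∘ₗ LinearMap.mul' ℂ Pxp := TensorProduct.ext' fun A B => by simp [hL]
  have hexp := (isLocallyNilpotent_poisson.smul c).exp_mul_of_mul_eq_add hcomm hD_comm
  calc moyalBilin c (L A) B
      = (LinearMap.mul' ℂ Pxp ∘ₗ (L.rTensor Pxp + D.lTensor Pxp))
          ((isLocallyNilpotent_poisson.smul c).exp (A ⊗ₜ B)) :=
        congrArg (LinearMap.mul' ℂ Pxp) (LinearMap.congr_fun hexp (A ⊗ₜ B))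
    _ = L (moyalBilin c A B) := by rw [hmul]; rfl

theorem moyalBilin_xStar_left (A B : Pxp) :
    moyalBilin c (xStar c A) B = xStar c (moyalBilin c A B) := by
  refine moyalBilin_map_left c (D := c • Dp) (a := 1) (b := 0) (by simp)
    (by simpa using Dx_xStar c) (by simpa using Dp_xStar c) (fun A B => ?_) A B
  simp only [xStar_apply, Dp_mul, LinearMap.smul_apply, smul_eq_C_mul]
  ring

theorem moyalBilin_pStar_left (A B : Pxp) :
    moyalBilin c (pStar c A) B = pStar c (moyalBilin c A B) := by
  refine moyalBilin_map_left c (D := -(c • Dx)) (a := 0) (b := 1) (by simp)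
    (by simpa using Dx_pStar c) (by simpa using Dp_pStar c) (fun A B => ?_) A B
  simp only [pStar_apply, Dx_mul, LinearMap.neg_apply, LinearMap.smul_apply, smul_eq_C_mul]
  ring

end MoyalProduct

section WeylOrdering

variable {E : Type*} [Ring E] [Algebra ℂ E] (P Q : E) (c : ℂ)

/-- The quantization `p^m x^n ↦ P^m Q^n` that writes every `P` to the left of every `Q`. -/
def normalOrder : Pxp →ₗ[ℂ] E :=
  (basisMonomials (Fin 2) ℂ).constr ℂ fun u => P ^ u 1 * Q ^ u 0

theorem normalOrder_pv_pow_mul_xv_pow (m n : ℕ) :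
    normalOrder P Q (pv ^ m * xv ^ n) = P ^ m * Q ^ n := by
  have h := (basisMonomials (Fin 2) ℂ).constr_basis ℂ (fun u => P ^ u 1 * Q ^ u 0)
    (Finsupp.single 1 m + Finsupp.single 0 n)
  simpa [normalOrder, monomial_one_eq_pv_pow_mul_xv_pow] using h

theorem normalOrder_pv_mul (A : Pxp) : normalOrder P Q (pv * A) = P * normalOrder P Q A := by
  suffices h : normalOrder P Q ∘ₗ LinearMap.mulLeft ℂ pv =
      LinearMap.mulLeft ℂ P ∘ₗ normalOrder P Q from LinearMap.congr_fun h A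
  refine linearMap_ext_pv_pow_mul_xv_pow fun m n => ?_
  simp only [LinearMap.comp_apply, LinearMap.mulLeft_apply, ← mul_assoc, ← pow_succ',
    normalOrder_pv_pow_mul_xv_pow]

variable {P Q c}

theorem normalOrder_xv_mul_add (hPQ : Q * P = P * Q + c • 1) (A : Pxp) :
    normalOrder P Q (xv * A + c • Dp A) = Q * normalOrder P Q A := by
  suffices h : normalOrder P Q ∘ₗ (LinearMap.mulLeft ℂ xv + c • Dp) =
      LinearMap.mulLeft ℂ Q ∘ₗ normalOrder P Q from LinearMap.congr_fun h A
  refine linearMap_ext_pv_pow_mul_xv_pow fun m n => ?_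
  have hpow : Q * P ^ m = P ^ m * Q + (c * m) • P ^ (m - 1) := by
    rw [pow_mul_of_mul_eq_add (N := -(c • 1)) (by rw [hPQ, add_neg_cancel_right])
      ((Commute.one_right P).smul_right c).neg_right m, neg_mul, smul_one_mul, add_assoc,
      left_eq_add, ← Nat.cast_smul_eq_nsmul ℂ]
    module
  calc normalOrder P Q (xv * (pv ^ m * xv ^ n) + c • Dp (pv ^ m * xv ^ n))
      = normalOrder P Q (pv ^ m * xv ^ (n + 1) + (c * m) • (pv ^ (m - 1) * xv ^ n)) := by
        rw [Dp_pv_pow_mul_xv_pow, smul_smul, mul_left_comm, pow_succ']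
    _ = (P ^ m * Q + (c * m) • P ^ (m - 1)) * Q ^ n := by
        rw [map_add, map_smul, normalOrder_pv_pow_mul_xv_pow, normalOrder_pv_pow_mul_xv_pow,
          pow_succ', add_mul, smul_mul_assoc, mul_assoc]
    _ = Q * normalOrder P Q (pv ^ m * xv ^ n) := by
        rw [← hpow, normalOrder_pv_pow_mul_xv_pow, mul_assoc]

variable (P Q c)

/-- Weyl quantization, obtained from normal ordering by precomposing with `exp (c ∂_x ∂_p)`;
here `c` stands for `iℏ/2`. -/
def weylOrder : Pxp →ₗ[ℂ] E :=
  normalOrder P Q ∘ₗ (isLocallyNilpotent_Dx_mul_Dp.smul c).exp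

theorem weylOrder_pv_pow_mul_xv_pow (m n : ℕ) : weylOrder P Q c (pv ^ m * xv ^ n) =
    ∑ s ∈ range (min m n + 1), (c ^ s * (m.factorial * n.factorial : ℂ) /
      (s.factorial * (m - s).factorial * (n - s).factorial)) • (P ^ (m - s) * Q ^ (n - s)) := by
  have hpow (s : ℕ) : ((c • (Dx * Dp)) ^ s) (pv ^ m * xv ^ n) =
      (c ^ s * (m.descFactorial s * n.descFactorial s)) • (pv ^ (m - s) * xv ^ (n - s)) := by
    rw [smul_pow, LinearMap.smul_apply, Dx_mul_Dp_pow_apply, smul_smul]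
  have hzero : ((c • (Dx * Dp)) ^ (min m n + 1)) (pv ^ m * xv ^ n) = 0 := by
    rw [hpow]
    rcases min_lt_iff.mp (Nat.lt_succ_self (min m n)) with h | h <;>
      simp only [Nat.descFactorial_of_lt h, Nat.cast_zero, mul_zero, zero_mul, zero_smul]
  rw [weylOrder, LinearMap.comp_apply, IsLocallyNilpotent.exp_apply_eq_sum _ hzero, map_sum]
  refine sum_congr rfl fun s hs => ?_
  have hsm : s ≤ m := by rw [mem_range] at hs; lia
  have hsn : s ≤ n := by rw [mem_range] at hs; lia
  rw [hpow, smul_smul, map_smul, normalOrder_pv_pow_mul_xv_pow,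
    ← Nat.factorial_mul_descFactorial hsm, ← Nat.factorial_mul_descFactorial hsn]
  have hms : ((m - s).factorial : ℂ) ≠ 0 := Nat.cast_ne_zero.mpr (Nat.factorial_ne_zero _)
  have hns : ((n - s).factorial : ℂ) ≠ 0 := Nat.cast_ne_zero.mpr (Nat.factorial_ne_zero _)
  congr 1
  push_cast
  field_simp

theorem weylOrder_one : weylOrder P Q c 1 = 1 := by
  simpa using weylOrder_pv_pow_mul_xv_pow P Q c 0 0

theorem weylOrder_pStar (A : Pxp) : weylOrder P Q c (pStar c A) = P * weylOrder P Q c A := by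
  have hcomm : c • (Dx * Dp) * pStar c = pStar c * c • (Dx * Dp) + c • Dx :=
    LinearMap.ext fun A => by simp [Dp_pStar, Dx_pStar]
  have hDx : Commute (c • (Dx * Dp)) (c • Dx) :=
    (((Commute.refl Dx).mul_left commute_Dx_Dp.symm).smul_left c).smul_right c
  have hexp := (isLocallyNilpotent_Dx_mul_Dp.smul c).exp_mul_of_mul_eq_add hcomm hDx
  rw [pStar, sub_add_cancel] at hexp
  rw [weylOrder, LinearMap.comp_apply, LinearMap.comp_apply, ← normalOrder_pv_mul]
  exact congrArg _ (LinearMap.congr_fun hexp A)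

variable {P Q c}

theorem weylOrder_xStar (hPQ : Q * P = P * Q + (2 * c) • 1) (A : Pxp) :
    weylOrder P Q c (xStar c A) = Q * weylOrder P Q c A := by
  have hcomm : c • (Dx * Dp) * xStar c = xStar c * c • (Dx * Dp) + c • Dp :=
    LinearMap.ext fun A => by simp [Dp_xStar, Dx_xStar]
  have hDp : Commute (c • (Dx * Dp)) (c • Dp) :=
    ((commute_Dx_Dp.mul_left (Commute.refl Dp)).smul_left c).smul_right c
  have hexp := (isLocallyNilpotent_Dx_mul_Dp.smul c).exp_mul_of_mul_eq_add hcomm hDp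
  rw [xStar, add_assoc, ← add_smul, ← two_mul] at hexp
  rw [weylOrder, LinearMap.comp_apply, LinearMap.comp_apply, ← normalOrder_xv_mul_add hPQ]
  exact congrArg _ (LinearMap.congr_fun hexp A)

theorem weylOrder_moyalBilin (hPQ : Q * P = P * Q + (2 * c) • 1) (A B : Pxp) :
    weylOrder P Q c (moyalBilin c A B) = weylOrder P Q c A * weylOrder P Q c B := by
  suffices h : weylOrder P Q c ∘ₗ (moyalBilin c).flip B =
      LinearMap.mulRight ℂ (weylOrder P Q c B) ∘ₗ weylOrder P Q c from LinearMap.congr_fun h A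
  apply linearMap_ext_of_xStar_pStar c (P := P) (Q := Q)
  · simp [moyalBilin_one_left, weylOrder_one]
  · simp [moyalBilin_xStar_left, weylOrder_xStar hPQ]
  · simp [weylOrder_xStar hPQ, mul_assoc]
  · simp [moyalBilin_pStar_left, weylOrder_pStar]
  · simp [weylOrder_pStar, mul_assoc]

theorem stmt14_general (ℏ : ℝ) (hPQ : Q * P = P * Q + (I * ℏ) • 1) (Φ : Pxp →ₗ[ℂ] E)
    (hΦ : ∀ m n : ℕ, Φ (pv ^ m * xv ^ n) =
      ∑ s ∈ range (min m n + 1),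
        ((I * ℏ) ^ s * (m.factorial * n.factorial : ℂ) /
          (2 ^ s * s.factorial * (m - s).factorial * (n - s).factorial)) •
          (P ^ (m - s) * Q ^ (n - s)))
    (A B : Pxp) : Φ (moyal ℏ A B) = Φ A * Φ B := by
  have hΦ_eq : Φ = weylOrder P Q (I * ℏ / 2) := linearMap_ext_pv_pow_mul_xv_pow fun m n => by
    rw [hΦ, weylOrder_pv_pow_mul_xv_pow]
    refine sum_congr rfl fun s _ => ?_
    rw [div_pow]
    congr 1
    field_simp
  rw [moyal_eq_moyalBilin, hΦ_eq, weylOrder_moyalBilin (by rw [hPQ, mul_div_cancel₀ _ two_ne_zero])]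

end WeylOrdering

section LadderOperators

theorem aop_single_zero (z : ℂ) : aop (Finsupp.single 0 z) = 0 := by simp [aop]

theorem aop_single_succ (n : ℕ) (z : ℂ) :
    aop (Finsupp.single (n + 1) z) = Finsupp.single n ((√(n + 1) : ℝ) * z) := by
  simp [aop]

theorem adop_single (n : ℕ) (z : ℂ) :
    adop (Finsupp.single n z) = Finsupp.single (n + 1) ((√(n + 1) : ℝ) * z) := by
  simp [adop]

theorem aop_mul_adop : (aop * adop : Module.End ℂ (ℕ →₀ ℂ)) = adop * aop + 1 := by
  have hsqrt (n : ℕ) (z : ℂ) : (√(n + 1) : ℝ) * ((√(n + 1) : ℝ) * z) = (n + 1) * z := by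
    rw [← mul_assoc, ← ofReal_mul, Real.mul_self_sqrt (by positivity)]
    push_cast
    rfl
  refine Finsupp.lhom_ext fun n z => ?_
  rcases n with _ | n
  · simp [adop_single, aop_single_zero, aop_single_succ]
  · simp only [Module.End.mul_apply, LinearMap.add_apply, Module.End.one_apply, adop_single,
      aop_single_succ, hsqrt, ← Finsupp.single_add]
    congr 1
    push_cast
    ring

theorem adop_mul_smul_aop (a : ℂ) :
    (adop * (-a) • aop : Module.End ℂ (ℕ →₀ ℂ)) = (-a) • aop * adop + a • 1 := by
  rw [mul_smul_comm, smul_mul_assoc, aop_mul_adop]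
  module

end LadderOperators

/-- the Weyl map
`Φ_W(p^m x^n) = Σ_{s=0}^{min(m,n)} ((iℏ)^s m!n!/(2^s s!(m−s)!(n−s)!)) F^{(m−s,n−s)}`
is a homomorphism from the Moyal algebra: `Φ_W(A ⋆ B) = Φ_W(A) ∘ Φ_W(B)`. -/
theorem stmt14 (ℏ : ℝ) (hℏ : ℏ ≠ 0)
    (ΦW : Pxp →ₗ[ℂ] Module.End ℂ (ℕ →₀ ℂ))
    (hΦW : ∀ m n : ℕ, ΦW (pv ^ m * xv ^ n) =
      ∑ s ∈ Finset.range (min m n + 1),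
        ((Complex.I * ℏ) ^ s * (m.factorial * n.factorial : ℂ) /
          (2 ^ s * s.factorial * (m - s).factorial * (n - s).factorial)) •
          F ℏ (m - s) (n - s)) :
    ∀ A B : Pxp, ΦW (moyal ℏ A B) = ΦW A * ΦW B :=
  stmt14_general (E := Module.End ℂ (ℕ →₀ ℂ)) ℏ (adop_mul_smul_aop (Complex.I * ℏ)) ΦW hΦW

end
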